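/- arXiv:2109.00502 — 6 statements merged into one kernel-verified Lean document; each statement's English description precedes it below -/
import Mathlib

section
/- For every integer k ≥ 2, there exists a bicrucial permutation of length 8k + 3. -/
/-- The permutation `σ` of length `n` has a square starting at position `k`
with half-length `ℓ`: the factors `(σ k, …, σ (k+ℓ-1))` and
`(σ (k+ℓ), …, σ (k+2ℓ-1))` are order-isomorphic. -/
def HasSquareAt {n : ℕ} (σ : Fin n → Fin n) (k ℓ : ℕ) : Prop :=
  2 ≤ ℓ ∧ ∃ hb : k + 2 * ℓ ≤ n, ∀ (i j : ℕ) (hi : i < ℓ) (hj : j < ℓ),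
    (σ ⟨k + i, by omega⟩ < σ ⟨k + j, by omega⟩ ↔
      σ ⟨k + ℓ + i, by omega⟩ < σ ⟨k + ℓ + j, by omega⟩)

/-- `σ` contains a square. -/
def ContainsSquare {n : ℕ} (σ : Fin n → Fin n) : Prop :=
  ∃ k ℓ : ℕ, HasSquareAt σ k ℓ

/-- `σ` is square-free: it contains no square. -/
def SquareFree {n : ℕ} (σ : Fin n → Fin n) : Prop :=
  ¬ ContainsSquare σ

/-- `π` (of length `n+1`) is a right-extension of `σ` (of length `n`):
the prefix `(π 0, …, π (n-1))` is order-isomorphic to `σ`. -/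
def IsRightExtension {n : ℕ} (σ : Fin n → Fin n) (π : Fin (n + 1) → Fin (n + 1)) : Prop :=
  ∀ i j : Fin n, π i.castSucc < π j.castSucc ↔ σ i < σ j

/-- `π` (of length `n+1`) is a left-extension of `σ` (of length `n`):
the suffix `(π 1, …, π n)` is order-isomorphic to `σ`. -/
def IsLeftExtension {n : ℕ} (σ : Fin n → Fin n) (π : Fin (n + 1) → Fin (n + 1)) : Prop :=
  ∀ i j : Fin n, π i.succ < π j.succ ↔ σ i < σ j

/-- `σ` is right-crucial: square-free, and every right-extension contains a square. -/
def RightCrucial {n : ℕ} (σ : Equiv.Perm (Fin n)) : Prop :=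
  SquareFree ⇑σ ∧ ∀ π : Equiv.Perm (Fin (n + 1)), IsRightExtension ⇑σ ⇑π → ContainsSquare ⇑π

/-- `σ` is left-crucial: square-free, and every left-extension contains a square. -/
def LeftCrucial {n : ℕ} (σ : Equiv.Perm (Fin n)) : Prop :=
  SquareFree ⇑σ ∧ ∀ π : Equiv.Perm (Fin (n + 1)), IsLeftExtension ⇑σ ⇑π → ContainsSquare ⇑π

/-- `σ` is bicrucial: both left-crucial and right-crucial. -/
def Bicrucial {n : ℕ} (σ : Equiv.Perm (Fin n)) : Prop :=
  LeftCrucial σ ∧ RightCrucial σ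

/-!
The permutation is the order pattern of the first `8k + 3` terms of an explicit sequence.

A sequence that periodically rises twice and falls twice has only squares of half-length divisible
by four, and taking every `d`-th term turns a square of half-length `dℓ` into one of half-length
`ℓ`. By descent, such a zigzag is square-free if its terms at odd positions are ordered like the
sequence itself.

In the sequence realising the permutation, the terms at odd positions are extreme (top or bottom),
those at positions divisible by `4` are intermediate (high or low), and those at positions
`2 mod 4` are ordered like a window of that self-similar zigzag. The sequence and its even part are
zigzags themselves, so squares descend to the window. A few terms are then moved, without spoiling
this argument, so that appending a term below the last one completes a square of half-length `8`,
and prepending a term below the first one completes a square of half-length `4`. An appended or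
prepended term above its neighbour completes a square of half-length `2`.
-/

/-- The factors of length `l` of `s` starting at `q` and at `q + l` are order-isomorphic: the
analogue of `HasSquareAt` for infinite sequences, without the condition `2 ≤ l`. -/
def IsOrderSquareAt {α : Type*} [LT α] (s : ℕ → α) (q l : ℕ) : Prop :=
  ∀ i j : ℕ, i < l → j < l → (s (q + i) < s (q + j) ↔ s (q + l + i) < s (q + l + j))

/-- The first `n` terms of `s` contain a square. -/
def HasOrderSquareBelow {α : Type*} [LT α] (s : ℕ → α) (n : ℕ) : Prop :=
  ∃ q l : ℕ, 2 ≤ l ∧ q + 2 * l ≤ n ∧ IsOrderSquareAt s q l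

/-- Between positions `a` and `b` the sequence `s` goes up, up, down, down periodically; `c` is
the phase of the pattern. -/
def IsZigzagOn {α : Type*} [LT α] (s : ℕ → α) (c a b : ℕ) : Prop :=
  ∀ p, a ≤ p → p < b → (s p < s (p + 1) ↔ (p + c) % 4 < 2)

/-- The self-map `f` of `Fin n` is ordered like the first `n` terms of `s`. -/
def IsPatternOf {α : Type*} [LT α] {n : ℕ} (f : Fin n → Fin n) (s : ℕ → α) : Prop :=
  ∀ i j : Fin n, f i < f j ↔ s i < s j

section Squares

variable {α β : Type*} {q l : ℕ}

lemma IsOrderSquareAt.of_lt_iff_lt [LT α] [LT β] {s : ℕ → α} {t : ℕ → β} {r : ℕ}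
    (h : IsOrderSquareAt s q l)
    (hst : ∀ i j, i < 2 * l → j < 2 * l → (s (q + i) < s (q + j) ↔ t (r + i) < t (r + j))) :
    IsOrderSquareAt t r l := by
  intro i j hi hj
  have h_right := hst (l + i) (l + j) (by omega) (by omega)
  simp only [← add_assoc] at h_right
  rw [← hst i j (by omega) (by omega), ← h_right]
  exact h i j hi hj

lemma IsOrderSquareAt.comp_mul_add [LT α] {s : ℕ → α} {d c r : ℕ}
    (h : IsOrderSquareAt s q (d * l)) (hq : q ≤ d * r + c) (hq' : d * r + c < q + d) :
    IsOrderSquareAt (fun i => s (d * i + c)) r l := by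
  intro i j hi hj
  obtain ⟨e, he⟩ := Nat.exists_eq_add_of_le hq
  have index_lt : ∀ i < l, e + d * i < d * l := fun i hi => by
    have := Nat.mul_le_mul_left d (Nat.succ_le_of_lt hi)
    rw [Nat.mul_succ] at this
    omega
  have h_left : ∀ i, d * (r + i) + c = q + (e + d * i) := fun i => by rw [mul_add]; omega
  have h_right : ∀ i, d * (r + l + i) + c = q + d * l + (e + d * i) := fun i => by
    rw [mul_add, mul_add]; omega
  simp only [h_left, h_right]
  exact h _ _ (index_lt i hi) (index_lt j hj)

lemma isOrderSquareAt_of_sortedLT [LinearOrder α] {s : ℕ → α} {τ : List ℕ}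
    (hτ : ∀ i < l, i ∈ τ) (h : (τ.map fun i => s (q + i)).SortedLT)
    (h' : (τ.map fun i => s (q + l + i)).SortedLT) : IsOrderSquareAt s q l := by
  intro i j hi hj
  obtain ⟨a, ha, rfl⟩ := List.getElem_of_mem (hτ i hi)
  obtain ⟨b, hb, rfl⟩ := List.getElem_of_mem (hτ j hj)
  have h_left := h.getElem_lt_getElem_iff (i := a) (j := b) (hi := by simpa) (hj := by simpa)
  have h_right := h'.getElem_lt_getElem_iff (i := a) (j := b) (hi := by simpa) (hj := by simpa)
  simp only [List.getElem_map] at h_left h_right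
  exact h_left.trans h_right.symm

lemma isZigzagOn_of_lt_or_gt [LinearOrder α] {s : ℕ → α} {c a b : ℕ}
    (h_up : ∀ p, a ≤ p → p < b → (p + c) % 4 < 2 → s p < s (p + 1))
    (h_down : ∀ p, a ≤ p → p < b → 2 ≤ (p + c) % 4 → s (p + 1) < s p) : IsZigzagOn s c a b :=
  fun p ha hb => ⟨fun h => by by_contra! h'; exact h.asymm (h_down p ha hb h'), h_up p ha hb⟩

lemma IsZigzagOn.four_dvd [LT α] {s : ℕ → α} {c a b : ℕ} (hs : IsZigzagOn s c a b)
    (h : IsOrderSquareAt s q l) (hl : 2 ≤ l) (ha : a ≤ q) (hb : q + 2 * l ≤ b + 1) : 4 ∣ l := by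
  have step_iff : ∀ i, i + 1 < l → ((q + i + c) % 4 < 2 ↔ (q + l + i + c) % 4 < 2) := by
    intro i hi
    rw [← hs _ (by omega) (by omega), ← hs _ (by omega) (by omega)]
    exact h i (i + 1) (by omega) hi
  have h0 := step_iff 0 (by omega)
  by_cases hl2 : l = 2
  · omega
  · have h1 := step_iff 1 (by omega)
    omega

end Squares

section Patterns

variable {α : Type*} {n : ℕ}

lemma IsPatternOf.containsSquare_iff [LT α] {f : Fin n → Fin n} {s : ℕ → α}
    (h : IsPatternOf f s) : ContainsSquare f ↔ HasOrderSquareBelow s n := by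
  constructor
  · rintro ⟨q, l, hl, hq, hf⟩
    exact ⟨q, l, hl, hq, fun i j hi hj => by simpa only [h _ _] using hf i j hi hj⟩
  · rintro ⟨q, l, hl, hq, hs⟩
    exact ⟨q, l, hl, hq, fun i j hi hj => by simpa only [h _ _] using hs i j hi hj⟩

lemma exists_perm_isPatternOf [LinearOrder α] {s : ℕ → α} (hs : Function.Injective s) (n : ℕ) :
    ∃ σ : Equiv.Perm (Fin n), IsPatternOf σ s := by
  set f : Fin n → α := fun i => s i
  have sort_strictMono : StrictMono (f ∘ Tuple.sort f) :=
    (Tuple.monotone_sort f).strictMono_of_injective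
      ((hs.comp Fin.val_injective).comp (Tuple.sort f).injective)
  refine ⟨(Tuple.sort f).symm, fun i j => ?_⟩
  simpa [f] using
    (sort_strictMono.lt_iff_lt (a := (Tuple.sort f).symm i) (b := (Tuple.sort f).symm j)).symm

lemma exists_nat_seq_isPatternOf (π : Equiv.Perm (Fin n)) :
    ∃ t : ℕ → ℕ, Set.InjOn t (Set.Iio n) ∧ IsPatternOf π t := by
  have extend_eq : ∀ i : Fin n, Function.extend Fin.val (fun i => (π i : ℕ)) 0 i = π i :=
    Fin.val_injective.extend_apply _ _
  refine ⟨Function.extend Fin.val (fun i => (π i : ℕ)) 0, fun p hp q hq hpq => ?_, fun i j => ?_⟩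
  · rw [extend_eq ⟨p, hp⟩, extend_eq ⟨q, hq⟩] at hpq
    exact congrArg Fin.val (π.injective (Fin.ext hpq))
  · rw [extend_eq, extend_eq, Fin.lt_def]

lemma IsPatternOf.rightCrucial [LT α] {σ : Equiv.Perm (Fin n)} {s : ℕ → α}
    (hσ : IsPatternOf σ s) (hs : ¬ HasOrderSquareBelow s n)
    (h : ∀ t : ℕ → ℕ, Set.InjOn t (Set.Iio (n + 1)) →
      (∀ p q, p < n → q < n → (t p < t q ↔ s p < s q)) → HasOrderSquareBelow t (n + 1)) :
    RightCrucial σ := by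
  refine ⟨fun hsq => hs (hσ.containsSquare_iff.mp hsq), fun π hπ => ?_⟩
  obtain ⟨t, t_inj, ht⟩ := exists_nat_seq_isPatternOf π
  exact ht.containsSquare_iff.mpr <| h t t_inj fun p q hp hq =>
    ((ht _ _).symm.trans (hπ ⟨p, hp⟩ ⟨q, hq⟩)).trans (hσ _ _)

lemma IsPatternOf.leftCrucial [LT α] {σ : Equiv.Perm (Fin n)} {s : ℕ → α}
    (hσ : IsPatternOf σ s) (hs : ¬ HasOrderSquareBelow s n)
    (h : ∀ t : ℕ → ℕ, Set.InjOn t (Set.Iio (n + 1)) →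
      (∀ p q, p < n → q < n → (t (p + 1) < t (q + 1) ↔ s p < s q)) →
        HasOrderSquareBelow t (n + 1)) :
    LeftCrucial σ := by
  refine ⟨fun hsq => hs (hσ.containsSquare_iff.mp hsq), fun π hπ => ?_⟩
  obtain ⟨t, t_inj, ht⟩ := exists_nat_seq_isPatternOf π
  exact ht.containsSquare_iff.mpr <| h t t_inj fun p q hp hq =>
    ((ht _ _).symm.trans (hπ ⟨p, hp⟩ ⟨q, hq⟩)).trans (hσ _ _)

end Patterns

section NestedZigzag

/-- The heights of the self-similar zigzag `nestedZigzag`: even positions carry alternating extremes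
of growing size, and the odd positions repeat the whole sequence. -/
def nestedHeight (n : ℕ) : ℤ :=
  if n % 4 = 0 then -(n + 1)
  else if n % 4 = 2 then n + 1
  else nestedHeight (n / 2)
termination_by n
decreasing_by omega

/-- A square-free sequence whose terms at odd positions are ordered like the sequence itself:
`nestedHeight` with ties broken by the index. -/
def nestedZigzag (n : ℕ) : ℤ ×ₗ ℕ := toLex (nestedHeight n, n)

lemma nestedZigzag_lt_iff {i j : ℕ} : nestedZigzag i < nestedZigzag j ↔
    nestedHeight i < nestedHeight j ∨ nestedHeight i = nestedHeight j ∧ i < j :=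
  Prod.Lex.toLex_lt_toLex

lemma nestedHeight_of_mod_four_eq_zero {n : ℕ} (h : n % 4 = 0) : nestedHeight n = -(n + 1) := by
  rw [nestedHeight, if_pos h]

lemma nestedHeight_of_mod_four_eq_two {n : ℕ} (h : n % 4 = 2) : nestedHeight n = n + 1 := by
  rw [nestedHeight, if_neg (by omega), if_pos h]

lemma nestedHeight_two_mul_add_one (i : ℕ) : nestedHeight (2 * i + 1) = nestedHeight i := by
  rw [nestedHeight, if_neg (by omega), if_neg (by omega), show (2 * i + 1) / 2 = i by omega]

lemma abs_nestedHeight_le (n : ℕ) : |nestedHeight n| ≤ n + 1 := by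
  induction n using Nat.strong_induction_on with
  | _ n ih =>
    obtain h | h | h : n % 4 = 0 ∨ n % 4 = 2 ∨ n % 2 = 1 := by omega
    · rw [nestedHeight_of_mod_four_eq_zero h, abs_neg, abs_of_nonneg (by positivity)]
    · rw [nestedHeight_of_mod_four_eq_two h, abs_of_nonneg (by positivity)]
    · obtain ⟨i, rfl⟩ : ∃ i, n = 2 * i + 1 := ⟨n / 2, by omega⟩
      rw [nestedHeight_two_mul_add_one]
      exact (ih i (by omega)).trans (by push_cast; omega)

lemma abs_nestedHeight_le_of_odd {n : ℕ} (h : n % 2 = 1) : |nestedHeight n| ≤ n / 2 + 1 := by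
  obtain ⟨i, rfl⟩ : ∃ i, n = 2 * i + 1 := ⟨n / 2, by omega⟩
  rw [nestedHeight_two_mul_add_one]
  exact (abs_nestedHeight_le i).trans (by push_cast; omega)

lemma nestedZigzag_two_mul_add_one_lt_iff {i j : ℕ} :
    nestedZigzag (2 * i + 1) < nestedZigzag (2 * j + 1) ↔ nestedZigzag i < nestedZigzag j := by
  rw [nestedZigzag_lt_iff, nestedZigzag_lt_iff, nestedHeight_two_mul_add_one,
    nestedHeight_two_mul_add_one]
  omega

lemma nestedZigzag_lt_of_le_add_one {m j : ℕ} (hm : m % 4 = 0) (hj : j ≤ m + 1) (hne : j ≠ m) :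
    nestedZigzag m < nestedZigzag j := by
  rw [nestedZigzag_lt_iff, nestedHeight_of_mod_four_eq_zero hm]
  obtain hlt | rfl : j < m ∨ j = m + 1 := by omega
  · have := abs_le.mp (abs_nestedHeight_le j)
    omega
  · have := abs_le.mp (abs_nestedHeight_le_of_odd (n := m + 1) (by omega))
    omega

lemma isZigzagOn_nestedZigzag (b : ℕ) : IsZigzagOn nestedZigzag 0 0 b := by
  refine isZigzagOn_of_lt_or_gt (fun p _ _ _ => ?_) fun p _ _ _ => ?_ <;>
    rw [nestedZigzag_lt_iff]
  · obtain h | h : p % 4 = 0 ∨ p % 4 = 1 := by omega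
    · have := abs_le.mp (abs_nestedHeight_le_of_odd (n := p + 1) (by omega))
      rw [nestedHeight_of_mod_four_eq_zero h]
      omega
    · have := abs_le.mp (abs_nestedHeight_le_of_odd (n := p) (by omega))
      rw [nestedHeight_of_mod_four_eq_two (n := p + 1) (by omega)]
      omega
  · obtain h | h : p % 4 = 2 ∨ p % 4 = 3 := by omega
    · have := abs_le.mp (abs_nestedHeight_le_of_odd (n := p + 1) (by omega))
      rw [nestedHeight_of_mod_four_eq_two h]
      omega
    · have := abs_le.mp (abs_nestedHeight_le_of_odd (n := p) (by omega))
      rw [nestedHeight_of_mod_four_eq_zero (n := p + 1) (by omega)]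
      omega

lemma not_isOrderSquareAt_nestedZigzag {q l : ℕ} (hl : 2 ≤ l) :
    ¬ IsOrderSquareAt nestedZigzag q l := by
  induction l using Nat.strong_induction_on generalizing q with
  | _ l ih =>
    intro h
    obtain ⟨g, rfl⟩ : 4 ∣ l :=
      (isZigzagOn_nestedZigzag (q + 2 * l)).four_dvd h hl (Nat.zero_le q) (Nat.le_succ _)
    have h_odd : IsOrderSquareAt (fun i => nestedZigzag (2 * i + 1)) (q / 2) (2 * g) :=
      IsOrderSquareAt.comp_mul_add (by rwa [← mul_assoc]) (by omega) (by omega)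
    exact ih (2 * g) (by omega) (by omega)
      (h_odd.of_lt_iff_lt fun _ _ _ _ => nestedZigzag_two_mul_add_one_lt_iff)

end NestedZigzag

section BicrucialSeq

/-- The coarse height of the `p`-th term of `bicrucialSeq k`. The generic levels are `2` (top),
`1` (high), `0` (middle), `-1` (low) and `-5` (bottom); positions `0`, `8k - 9`, `8k - 6`, `8k - 4`
and `8k + 2` are exceptional. -/
def bicrucialLevel (k p : ℕ) : ℤ :=
  if p % 4 = 1 then 2
  else if p % 4 = 3 then if p + 9 = 8 * k then -2 else -5
  else if p % 4 = 2 then if p = 8 * k + 2 then -6 else if p + 6 = 8 * k then -3 else 0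
  else if p % 8 = 4 then if p + 4 = 8 * k then -4 else -1
  else if p = 0 then -7 else 1

/-- The position in `nestedZigzag` at which the window used by `bicrucialSeq k` starts: `0` or `2`,
chosen so that entry `2k - 2` of the window lies at a position divisible by `4`. -/
def windowStart (k : ℕ) : ℕ := 2 * ((k + 1) % 2)

/-- A sequence whose first `8k + 3` terms have a bicrucial order pattern. Terms are compared by
level; within the middle level, by the window of `nestedHeight`; and then by position. -/
def bicrucialSeq (k p : ℕ) : ℤ ×ₗ ℤ ×ₗ ℕ :=
  toLex (bicrucialLevel k p, toLex
    (if bicrucialLevel k p = 0 then nestedHeight (p / 4 + windowStart k) else 0, p))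

variable {k : ℕ}

lemma bicrucialLevel_of_mod_four_eq_one {p : ℕ} (h : p % 4 = 1) : bicrucialLevel k p = 2 := by
  simp [bicrucialLevel, h]

lemma bicrucialLevel_of_mod_four_eq_three {p : ℕ} (h : p % 4 = 3) :
    bicrucialLevel k p = if p + 9 = 8 * k then -2 else -5 := by
  simp [bicrucialLevel, h]

lemma bicrucialLevel_of_mod_four_eq_two {p : ℕ} (h : p % 4 = 2) :
    bicrucialLevel k p = if p = 8 * k + 2 then -6 else if p + 6 = 8 * k then -3 else 0 := by
  simp [bicrucialLevel, h]

lemma bicrucialLevel_of_mod_eight_eq_four {p : ℕ} (h : p % 8 = 4) :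
    bicrucialLevel k p = if p + 4 = 8 * k then -4 else -1 := by
  simp [bicrucialLevel, h, show p % 4 = 0 by omega]

lemma bicrucialLevel_of_mod_eight_eq_zero {p : ℕ} (h : p % 8 = 0) :
    bicrucialLevel k p = if p = 0 then -7 else 1 := by
  simp [bicrucialLevel, h, show p % 4 = 0 by omega]

lemma bicrucialSeq_injective (k : ℕ) : Function.Injective (bicrucialSeq k) := fun _ _ h =>
  congrArg (fun x => (ofLex (ofLex x).2).2) h

lemma bicrucialSeq_lt_of_level_lt {p q : ℕ} (h : bicrucialLevel k p < bicrucialLevel k q) :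
    bicrucialSeq k p < bicrucialSeq k q :=
  Prod.Lex.toLex_lt_toLex.mpr (Or.inl h)

lemma bicrucialSeq_lt_of_level_eq {p q : ℕ} (h : bicrucialLevel k p = bicrucialLevel k q)
    (h0 : bicrucialLevel k q ≠ 0) (hpq : p < q) : bicrucialSeq k p < bicrucialSeq k q := by
  simp [bicrucialSeq, Prod.Lex.toLex_lt_toLex, h, h0, hpq]

lemma bicrucialLevel_even_lt_top {p q : ℕ} (hp : p % 2 = 0) (hq : q % 4 = 1) :
    bicrucialLevel k p < bicrucialLevel k q := by
  rw [bicrucialLevel_of_mod_four_eq_one hq]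
  unfold bicrucialLevel
  split_ifs <;> omega

lemma bicrucialLevel_bottom_lt_even {p q : ℕ} (hp : p % 4 = 3) (hq : q % 2 = 0) (hq0 : q ≠ 0)
    (hqk : q < 8 * k + 2) (hpq : q ≤ p + 1 ∧ p ≤ q + 1) :
    bicrucialLevel k p < bicrucialLevel k q := by
  rw [bicrucialLevel_of_mod_four_eq_three hp]
  unfold bicrucialLevel
  split_ifs <;> omega

lemma isZigzagOn_bicrucialSeq (k : ℕ) : IsZigzagOn (bicrucialSeq k) 1 0 (8 * k + 2) := by
  refine isZigzagOn_of_lt_or_gt (fun p _ _ _ => ?_) fun p _ _ _ => ?_ <;>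
    apply bicrucialSeq_lt_of_level_lt
  · obtain h | h : p % 4 = 0 ∨ p % 4 = 3 := by omega
    · exact bicrucialLevel_even_lt_top (by omega) (by omega)
    · exact bicrucialLevel_bottom_lt_even h (by omega) (by omega) (by omega) (by omega)
  · obtain h | h : p % 4 = 1 ∨ p % 4 = 2 := by omega
    · exact bicrucialLevel_even_lt_top (by omega) h
    · exact bicrucialLevel_bottom_lt_even (by omega) (by omega) (by omega) (by omega) (by omega)

lemma bicrucialLevel_mid_lt_high {p q : ℕ} (hp : p % 4 = 2) (hq : q % 8 = 0) (hq0 : q ≠ 0) :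
    bicrucialLevel k p < bicrucialLevel k q := by
  rw [bicrucialLevel_of_mod_four_eq_two hp, bicrucialLevel_of_mod_eight_eq_zero hq]
  split_ifs <;> omega

lemma bicrucialLevel_low_lt_mid {p q : ℕ} (hp : p % 8 = 4) (hq : q % 4 = 2) (hqk : q < 8 * k + 2)
    (hpq : q ≤ p + 2 ∧ p ≤ q + 2) : bicrucialLevel k p < bicrucialLevel k q := by
  rw [bicrucialLevel_of_mod_eight_eq_four hp, bicrucialLevel_of_mod_four_eq_two hq]
  split_ifs <;> omega

lemma isZigzagOn_bicrucialSeq_even (k : ℕ) :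
    IsZigzagOn (fun i => bicrucialSeq k (2 * i)) 2 1 (4 * k + 1) := by
  refine isZigzagOn_of_lt_or_gt (fun i _ _ _ => ?_) fun i _ _ _ => ?_ <;>
    apply bicrucialSeq_lt_of_level_lt
  · obtain h | h : i % 4 = 2 ∨ i % 4 = 3 := by omega
    · exact bicrucialLevel_low_lt_mid (by omega) (by omega) (by omega) (by omega)
    · exact bicrucialLevel_mid_lt_high (by omega) (by omega) (by omega)
  · obtain h | h : i % 4 = 0 ∨ i % 4 = 1 := by omega
    · exact bicrucialLevel_mid_lt_high (by omega) (by omega) (by omega)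
    · exact bicrucialLevel_low_lt_mid (by omega) (by omega) (by omega) (by omega)

lemma bicrucialLevel_window {a : ℕ} (ha : a < 2 * k) :
    bicrucialLevel k (4 * a + 2) = if a + 2 = 2 * k then -3 else 0 := by
  rw [bicrucialLevel_of_mod_four_eq_two (by omega), if_neg (by omega)]
  simp only [show 4 * a + 2 + 6 = 8 * k ↔ a + 2 = 2 * k by omega]

lemma nestedZigzag_window_min_lt {a m : ℕ} (hm : m + 2 = 2 * k) (ha : a < 2 * k) (hne : a ≠ m) :
    nestedZigzag (m + windowStart k) < nestedZigzag (a + windowStart k) :=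
  nestedZigzag_lt_of_le_add_one (by unfold windowStart; omega) (by omega) (by omega)

/-- Position `8k - 6` has an exceptional level, but it carries the least entry of the window. -/
lemma bicrucialSeq_window_lt_iff {a b : ℕ} (ha : a < 2 * k) (hb : b < 2 * k) :
    bicrucialSeq k (4 * a + 2) < bicrucialSeq k (4 * b + 2) ↔
      nestedZigzag (a + windowStart k) < nestedZigzag (b + windowStart k) := by
  have index (c : ℕ) : (4 * c + 2) / 4 = c := by omega
  by_cases hab : a = b
  · simp [hab]
  by_cases ha' : a + 2 = 2 * k
  · refine iff_of_true (bicrucialSeq_lt_of_level_lt ?_)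
      (nestedZigzag_window_min_lt ha' hb (Ne.symm hab))
    rw [bicrucialLevel_window ha, bicrucialLevel_window hb, if_pos ha', if_neg (by omega)]
    norm_num
  by_cases hb' : b + 2 = 2 * k
  · refine iff_of_false (bicrucialSeq_lt_of_level_lt ?_).asymm
      (nestedZigzag_window_min_lt hb' ha hab).asymm
    rw [bicrucialLevel_window ha, bicrucialLevel_window hb, if_pos hb', if_neg ha']
    norm_num
  simp only [bicrucialSeq, Prod.Lex.toLex_lt_toLex, bicrucialLevel_window ha,
    bicrucialLevel_window hb, if_neg ha', if_neg hb', nestedZigzag_lt_iff, index, lt_irrefl,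
    true_and, false_or, if_true]
  omega

lemma isZigzagOn_bicrucialSeq_window (k : ℕ) :
    IsZigzagOn (fun a => bicrucialSeq k (4 * a + 2)) (windowStart k) 0 (2 * k - 1) := by
  intro a _ ha
  rw [bicrucialSeq_window_lt_iff (by omega) (by omega), add_right_comm]
  exact isZigzagOn_nestedZigzag (a + windowStart k + 1) (a + windowStart k) (Nat.zero_le _)
    (Nat.lt_succ_self _)

lemma ne_zero_of_isOrderSquareAt_bicrucialSeq {q l : ℕ} (hl : 0 < l) (hl4 : 4 ∣ l)
    (hq : q + 2 * l ≤ 8 * k + 3) (h : IsOrderSquareAt (bicrucialSeq k) q l) : q ≠ 0 := by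
  rintro rfl
  have first_lt : bicrucialSeq k (0 + 0) < bicrucialSeq k (0 + 3) := by
    apply bicrucialSeq_lt_of_level_lt
    rw [bicrucialLevel_of_mod_eight_eq_zero (by omega),
      bicrucialLevel_of_mod_four_eq_three (by omega)]
    split_ifs <;> omega
  refine ((h 0 3 (by omega) (by omega)).mp first_lt).asymm (bicrucialSeq_lt_of_level_lt ?_)
  rw [bicrucialLevel_of_mod_four_eq_three (by omega)]
  obtain h8 | h8 : (0 + l + 0) % 8 = 0 ∨ (0 + l + 0) % 8 = 4 := by omega
  · rw [bicrucialLevel_of_mod_eight_eq_zero h8]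
    split_ifs <;> omega
  · rw [bicrucialLevel_of_mod_eight_eq_four h8]
    split_ifs <;> omega

lemma eight_dvd_of_isOrderSquareAt_bicrucialSeq {q l : ℕ} (hl : 2 ≤ l)
    (hq : q + 2 * l ≤ 8 * k + 3) (h : IsOrderSquareAt (bicrucialSeq k) q l) : 8 ∣ l := by
  have hl4 : 4 ∣ l := (isZigzagOn_bicrucialSeq k).four_dvd h hl (Nat.zero_le q) hq
  have hq0 : q ≠ 0 := ne_zero_of_isOrderSquareAt_bicrucialSeq (by omega) hl4 hq h
  obtain ⟨g, rfl⟩ : 2 ∣ l := by omega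
  have h_even : IsOrderSquareAt (fun i => bicrucialSeq k (2 * i)) ((q + 1) / 2) g :=
    h.comp_mul_add (c := 0) (by omega) (by omega)
  have := (isZigzagOn_bicrucialSeq_even k).four_dvd h_even (by omega) (by omega) (by omega)
  omega

lemma last_lt_bicrucialSeq {p : ℕ} (hp : p ≠ 0) (hpk : p < 8 * k + 2) :
    bicrucialSeq k (8 * k + 2) < bicrucialSeq k p := by
  apply bicrucialSeq_lt_of_level_lt
  rw [bicrucialLevel_of_mod_four_eq_two (by omega), if_pos rfl]
  unfold bicrucialLevel
  split_ifs <;> omega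

lemma add_two_mul_ne_of_isOrderSquareAt_window {r g : ℕ} (hg : 4 ≤ g) (hg2 : 2 ∣ g)
    (h : IsOrderSquareAt (fun a => bicrucialSeq k (4 * a + 2)) r g) : r + 2 * g ≠ 2 * k + 1 := by
  intro hr
  have zigzag := isZigzagOn_bicrucialSeq_window k
  have last_step : bicrucialSeq k (4 * (r + (g - 1)) + 2) <
      bicrucialSeq k (4 * (r + (g - 2)) + 2) := by
    refine (h (g - 1) (g - 2) (by omega) (by omega)).mpr ?_
    have last_index : 4 * (r + g + (g - 1)) + 2 = 8 * k + 2 := by omega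
    simpa only [last_index] using last_lt_bicrucialSeq (by omega) (by omega)
  have last_phase : ¬ (r + (g - 2) + windowStart k) % 4 < 2 := by
    rw [← zigzag _ (by omega) (by omega), show r + (g - 2) + 1 = r + (g - 1) by omega]
    exact last_step.asymm
  have prev_phase := h (g - 3) (g - 2) (by omega) (by omega)
  rw [show r + (g - 2) = r + (g - 3) + 1 by omega,
    show r + g + (g - 2) = r + g + (g - 3) + 1 by omega,
    zigzag _ (by omega) (by omega), zigzag _ (by omega) (by omega)] at prev_phase
  unfold windowStart at *
  omega

lemma not_isOrderSquareAt_bicrucialSeq_eight {q : ℕ} (hq : q + 13 = 8 * k) :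
    ¬ IsOrderSquareAt (bicrucialSeq k) q 8 := by
  intro h
  have first_lt : bicrucialSeq k (q + 0) < bicrucialSeq k (q + 7) := by
    apply bicrucialSeq_lt_of_level_lt
    rw [bicrucialLevel_of_mod_four_eq_three (by omega),
      bicrucialLevel_of_mod_four_eq_two (by omega)]
    split_ifs <;> omega
  refine ((h 0 7 (by omega) (by omega)).mp first_lt).asymm ?_
  rw [show q + 8 + 7 = 8 * k + 2 by omega]
  exact last_lt_bicrucialSeq (by omega) (by omega)

lemma not_hasOrderSquareBelow_bicrucialSeq (k : ℕ) :
    ¬ HasOrderSquareBelow (bicrucialSeq k) (8 * k + 3) := by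
  rintro ⟨q, l, hl, hq, h⟩
  have hl8 := eight_dvd_of_isOrderSquareAt_bicrucialSeq hl hq h
  obtain ⟨g, rfl⟩ : 4 ∣ l := by omega
  have h_window : IsOrderSquareAt (fun a => bicrucialSeq k (4 * a + 2)) ((q + 1) / 4) g :=
    h.comp_mul_add (by omega) (by omega)
  by_cases h_end : (q + 1) / 4 + 2 * g ≤ 2 * k
  · have h_nested : IsOrderSquareAt nestedZigzag ((q + 1) / 4 + windowStart k) g :=
      h_window.of_lt_iff_lt fun i j hi hj => by
        rw [bicrucialSeq_window_lt_iff (by omega) (by omega), add_right_comm, add_right_comm _ j]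
    exact not_isOrderSquareAt_nestedZigzag (by omega) h_nested
  · obtain rfl | hg : g = 2 ∨ 4 ≤ g := by omega
    · exact not_isOrderSquareAt_bicrucialSeq_eight (by omega) h
    · exact add_two_mul_ne_of_isOrderSquareAt_window hg (by omega) h_window (by omega)

/-- The levels of the first seven terms of `bicrucialSeq k`. -/
def headLevels : Fin 7 → ℤ := ![-7, 2, 0, -5, -1, 2, 0]

/-- The levels of the terms of `bicrucialSeq k` at positions `8k - 12, …, 8k + 2`. -/
def tailLevels : Fin 15 → ℤ := ![-1, 2, 0, -2, 1, 2, -3, -5, -4, 2, 0, -5, 1, 2, -6]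

lemma bicrucialLevel_head (hk : 2 ≤ k) (i : Fin 7) : bicrucialLevel k i = headLevels i := by
  fin_cases i <;> simp [bicrucialLevel, headLevels] <;> omega

lemma bicrucialLevel_tail {q : ℕ} (hq : q + 12 = 8 * k) (i : Fin 15) :
    bicrucialLevel k (q + i) = tailLevels i := by
  obtain ⟨m, rfl⟩ : ∃ m, k = m + 2 := ⟨k - 2, by omega⟩
  obtain rfl : q = 8 * m + 4 := by omega
  fin_cases i <;> simp [bicrucialLevel, tailLevels] <;> omega

lemma bicrucialSeq_head_lt (hk : 2 ≤ k) {i j : Fin 7} (h : headLevels i < headLevels j) :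
    bicrucialSeq k i < bicrucialSeq k j :=
  bicrucialSeq_lt_of_level_lt (by rwa [bicrucialLevel_head hk, bicrucialLevel_head hk])

lemma bicrucialSeq_tail_lt {q : ℕ} (hq : q + 12 = 8 * k) {i j : Fin 15}
    (h : tailLevels i < tailLevels j ∨ tailLevels i = tailLevels j ∧ tailLevels j ≠ 0 ∧ i < j) :
    bicrucialSeq k (q + i) < bicrucialSeq k (q + j) := by
  simp only [← bicrucialLevel_tail hq] at h
  obtain h | ⟨h, h0, hij⟩ := h
  · exact bicrucialSeq_lt_of_level_lt h
  · exact bicrucialSeq_lt_of_level_eq h h0 (by omega)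

lemma hasOrderSquareBelow_of_append (hk : 2 ≤ k) {t : ℕ → ℕ}
    (t_inj : Set.InjOn t (Set.Iio (8 * k + 3 + 1)))
    (ht : ∀ p q, p < 8 * k + 3 → q < 8 * k + 3 →
      (t p < t q ↔ bicrucialSeq k p < bicrucialSeq k q)) :
    HasOrderSquareBelow t (8 * k + 3 + 1) := by
  obtain ⟨q, hq⟩ : ∃ q, q + 12 = 8 * k := ⟨8 * k - 12, by omega⟩
  rw [← hq] at t_inj ht ⊢
  have lt_of_tail (i j : Fin 15) (h : tailLevels i < tailLevels j ∨
      tailLevels i = tailLevels j ∧ tailLevels j ≠ 0 ∧ i < j) : t (q + i) < t (q + j) :=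
    (ht _ _ (by omega) (by omega)).mpr (bicrucialSeq_tail_lt hq h)
  have last_ne : t (q + 14) ≠ t (q + 15) := fun h => by
    have := t_inj (Set.mem_Iio.mpr (by omega)) (Set.mem_Iio.mpr (by omega)) h
    omega
  obtain h_up | h_down := last_ne.lt_or_gt
  · refine ⟨q + 12, 2, le_rfl, by omega,
      isOrderSquareAt_of_sortedLT (τ := [0, 1]) (by decide) ?_ ?_⟩
    · simpa [List.sortedLT_iff_isChain] using lt_of_tail 12 13 (by decide)
    · simpa [List.sortedLT_iff_isChain] using h_up
  · refine ⟨q, 8, by omega, by omega,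
      isOrderSquareAt_of_sortedLT (τ := [7, 6, 3, 0, 2, 4, 1, 5]) (by decide) ?_ ?_⟩ <;>
    simp only [List.map_cons, List.map_nil, List.sortedLT_iff_isChain, List.isChain_cons_cons,
      List.isChain_singleton, and_true]
    · exact ⟨lt_of_tail 7 6 (by decide), lt_of_tail 6 3 (by decide), lt_of_tail 3 0 (by decide),
        lt_of_tail 0 2 (by decide), lt_of_tail 2 4 (by decide), lt_of_tail 4 1 (by decide),
        lt_of_tail 1 5 (by decide)⟩
    · exact ⟨h_down, lt_of_tail 14 11 (by decide), lt_of_tail 11 8 (by decide),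
        lt_of_tail 8 10 (by decide), lt_of_tail 10 12 (by decide), lt_of_tail 12 9 (by decide),
        lt_of_tail 9 13 (by decide)⟩

lemma hasOrderSquareBelow_of_prepend (hk : 2 ≤ k) {t : ℕ → ℕ}
    (t_inj : Set.InjOn t (Set.Iio (8 * k + 3 + 1)))
    (ht : ∀ p q, p < 8 * k + 3 → q < 8 * k + 3 →
      (t (p + 1) < t (q + 1) ↔ bicrucialSeq k p < bicrucialSeq k q)) :
    HasOrderSquareBelow t (8 * k + 3 + 1) := by
  have lt_of_head (i j : Fin 7) (h : headLevels i < headLevels j) : t (i + 1) < t (j + 1) :=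
    (ht _ _ (by omega) (by omega)).mpr (bicrucialSeq_head_lt hk h)
  have first_ne : t 0 ≠ t 1 := fun h => by
    have := t_inj (Set.mem_Iio.mpr (by omega)) (Set.mem_Iio.mpr (by omega)) h
    omega
  obtain h_up | h_down := first_ne.lt_or_gt
  · refine ⟨0, 4, by omega, by omega,
      isOrderSquareAt_of_sortedLT (τ := [0, 1, 3, 2]) (by decide) ?_ ?_⟩ <;>
    simp only [List.map_cons, List.map_nil, List.sortedLT_iff_isChain, List.isChain_cons_cons,
      List.isChain_singleton, and_true]
    · exact ⟨h_up, lt_of_head 0 2 (by decide), lt_of_head 2 1 (by decide)⟩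
    · exact ⟨lt_of_head 3 4 (by decide), lt_of_head 4 6 (by decide), lt_of_head 6 5 (by decide)⟩
  · refine ⟨0, 2, le_rfl, by omega, isOrderSquareAt_of_sortedLT (τ := [1, 0]) (by decide) ?_ ?_⟩
    · simpa [List.sortedLT_iff_isChain] using h_down
    · simpa [List.sortedLT_iff_isChain] using lt_of_head 2 1 (by decide)

end BicrucialSeq

/-- For every integer `k ≥ 2`, there exists a bicrucial permutation of length `8k + 3`. -/
theorem bicrucial_exists_8k_add_3' (k : ℕ) (hk : 2 ≤ k) :
    ∃ σ : Equiv.Perm (Fin (8 * k + 3)), Bicrucial σ := by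
  obtain ⟨σ, hσ⟩ := exists_perm_isPatternOf (bicrucialSeq_injective k) (8 * k + 3)
  have square_free := not_hasOrderSquareBelow_bicrucialSeq k
  exact ⟨σ, hσ.leftCrucial square_free fun _ => hasOrderSquareBelow_of_prepend hk,
    hσ.rightCrucial square_free fun _ => hasOrderSquareBelow_of_append hk⟩
end

section
/- For every n in the set {32, 34, 36, 40, 42, 44, 46}, there exists a bicrucial permutation of length n. -/
/-!
A one-entry extension of a permutation `σ` of length `n` is determined by the value of its new
entry, so there are only `n + 1` extensions on each side. When `σ` is square-free, every square
of an extension uses the new entry, hence is a prefix of a left-extension or a suffix of a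
right-extension. Bicruciality thus becomes a finite search, small enough for explicit
permutations to be verified by evaluation.
-/

open Equiv (Perm)

section OrderIsomorphic

variable {α β γ δ : Type*} {n : ℕ}

/-- Order-isomorphism of finite sequences, as in the definition of a square; the two sequences may
take values in different types, so that a permutation can be compared with its extensions. -/
def OrderIsomorphic [LT α] [LT β] (a : Fin n → α) (b : Fin n → β) : Prop :=
  ∀ i j, a i < a j ↔ b i < b j

/-- The factor `(a k, …, a (k+ℓ-1))`, reindexed by `Fin ℓ`. -/
def factor (a : Fin n → α) (k ℓ : ℕ) (h : k + ℓ ≤ n) : Fin ℓ → α :=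
  fun i => a ⟨k + i, by omega⟩

variable [LT α] [LT β] [LT γ] [LT δ]
  {a : Fin n → α} {b : Fin n → β} {c : Fin n → γ} {d : Fin n → δ}

instance [DecidableLT α] [DecidableLT β] : Decidable (OrderIsomorphic a b) :=
  inferInstanceAs (Decidable (∀ i j, a i < a j ↔ b i < b j))

theorem OrderIsomorphic.congr (hac : OrderIsomorphic a c) (hbd : OrderIsomorphic b d) :
    OrderIsomorphic a b ↔ OrderIsomorphic c d :=
  forall₂_congr fun i j => iff_congr (hac i j) (hbd i j)

end OrderIsomorphic

section Square

variable {n k ℓ : ℕ} {σ : Fin n → Fin n}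

theorem hasSquareAt_iff_orderIsomorphic_factor :
    HasSquareAt σ k ℓ ↔ 2 ≤ ℓ ∧ ∃ _ : k + 2 * ℓ ≤ n,
      OrderIsomorphic (factor σ k ℓ (by omega)) (factor σ (k + ℓ) ℓ (by omega)) := by
  simp only [HasSquareAt, OrderIsomorphic, factor, Fin.forall_iff]
  grind

instance : Decidable (HasSquareAt σ k ℓ) :=
  decidable_of_iff' _ hasSquareAt_iff_orderIsomorphic_factor

theorem containsSquare_iff_exists_le :
    ContainsSquare σ ↔ ∃ ℓ ≤ n / 2, ∃ k ≤ n - 2 * ℓ, HasSquareAt σ k ℓ := by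
  refine ⟨fun ⟨k, ℓ, hsq⟩ => ?_, fun ⟨ℓ, _, k, _, hsq⟩ => ⟨k, ℓ, hsq⟩⟩
  have ⟨_, hb, _⟩ := hsq
  exact ⟨ℓ, by omega, k, by omega, hsq⟩

instance : Decidable (SquareFree σ) :=
  decidable_of_iff' _ containsSquare_iff_exists_le.not

end Square

section Extension

variable {n k ℓ : ℕ} {σ : Fin n → Fin n} {π : Fin (n + 1) → Fin (n + 1)}

theorem IsLeftExtension.orderIsomorphic_factor (h : IsLeftExtension σ π) (hk : k + ℓ ≤ n) :
    OrderIsomorphic (factor π (k + 1) ℓ (by omega)) (factor σ k ℓ hk) := fun i j => by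
  simp only [factor, add_right_comm k 1]
  exact h ⟨k + i, by omega⟩ ⟨k + j, by omega⟩

theorem IsRightExtension.orderIsomorphic_factor (h : IsRightExtension σ π) (hk : k + ℓ ≤ n) :
    OrderIsomorphic (factor π k ℓ (by omega)) (factor σ k ℓ hk) :=
  fun i j => h ⟨k + i, by omega⟩ ⟨k + j, by omega⟩

theorem IsLeftExtension.hasSquareAt_succ_iff (h : IsLeftExtension σ π) :
    HasSquareAt π (k + 1) ℓ ↔ HasSquareAt σ k ℓ := by
  have hfst (hk : k + ℓ ≤ n) := h.orderIsomorphic_factor hk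
  have hsnd (hk : k + ℓ + ℓ ≤ n) :
      OrderIsomorphic (factor π (k + 1 + ℓ) ℓ (by omega)) (factor σ (k + ℓ) ℓ hk) := by
    convert h.orderIsomorphic_factor hk using 2
    exact add_right_comm k 1 ℓ
  simp only [hasSquareAt_iff_orderIsomorphic_factor]
  exact and_congr_right fun _ =>
    ⟨fun ⟨_, hsq⟩ => ⟨by omega, ((hfst (by omega)).congr (hsnd (by omega))).1 hsq⟩,
      fun ⟨_, hsq⟩ => ⟨by omega, ((hfst (by omega)).congr (hsnd (by omega))).2 hsq⟩⟩

theorem IsRightExtension.hasSquareAt_iff (h : IsRightExtension σ π) (hk : k + 2 * ℓ ≤ n) :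
    HasSquareAt π k ℓ ↔ HasSquareAt σ k ℓ := by
  simp only [hasSquareAt_iff_orderIsomorphic_factor]
  have hfst := h.orderIsomorphic_factor (by omega : k + ℓ ≤ n)
  have hsnd := h.orderIsomorphic_factor (by omega : k + ℓ + ℓ ≤ n)
  exact and_congr_right fun _ => ⟨fun ⟨_, hsq⟩ => ⟨hk, (hfst.congr hsnd).1 hsq⟩,
    fun ⟨_, hsq⟩ => ⟨by omega, (hfst.congr hsnd).2 hsq⟩⟩

theorem IsLeftExtension.containsSquare_iff (h : IsLeftExtension σ π) (hσ : SquareFree σ) :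
    ContainsSquare π ↔ ∃ ℓ ≤ (n + 1) / 2, HasSquareAt π 0 ℓ := by
  refine ⟨?_, fun ⟨ℓ, _, hsq⟩ => ⟨0, ℓ, hsq⟩⟩
  rintro ⟨_ | k, ℓ, hsq⟩
  · have ⟨_, hb, _⟩ := hsq
    exact ⟨ℓ, by omega, hsq⟩
  · exact absurd ⟨k, ℓ, h.hasSquareAt_succ_iff.1 hsq⟩ hσ

theorem IsRightExtension.containsSquare_iff (h : IsRightExtension σ π) (hσ : SquareFree σ) :
    ContainsSquare π ↔ ∃ ℓ ≤ (n + 1) / 2, HasSquareAt π (n + 1 - 2 * ℓ) ℓ := by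
  refine ⟨fun ⟨k, ℓ, hsq⟩ => ?_, fun ⟨ℓ, _, hsq⟩ => ⟨_, ℓ, hsq⟩⟩
  have ⟨_, hb, _⟩ := hsq
  have hk : ¬ k + 2 * ℓ ≤ n := fun hk => hσ ⟨k, ℓ, (h.hasSquareAt_iff hk).1 hsq⟩
  obtain rfl : k = n + 1 - 2 * ℓ := by omega
  exact ⟨ℓ, by omega, hsq⟩

end Extension

section InsertAt

variable {n : ℕ} {σ : Perm (Fin n)} {π : Perm (Fin (n + 1))} {p v : Fin (n + 1)}

/-- The one-entry extension of `σ` with value `v` at position `p`: the entries of `σ` are moved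
around position `p`, and their values around `v`. All left- and right-extensions are of this form,
with `p = 0` and `p = Fin.last n` respectively. -/
def insertAt (σ : Perm (Fin n)) (p v : Fin (n + 1)) : Perm (Fin (n + 1)) :=
  (finSuccEquiv' p).trans (σ.optionCongr.trans (finSuccEquiv' v).symm)

@[simp]
theorem insertAt_self : insertAt σ p v p = v := by
  simp [insertAt]

@[simp]
theorem insertAt_succAbove (i : Fin n) : insertAt σ p v (p.succAbove i) = v.succAbove (σ i) := by
  simp [insertAt]

theorem eq_insertAt_of_lt_iff_lt
    (h : ∀ i j, π (p.succAbove i) < π (p.succAbove j) ↔ σ i < σ j) : π = insertAt σ p (π p) := by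
  -- Both sides of `hcomp` enumerate the values other than `π p` in increasing order.
  have hcomp : π ∘ p.succAbove ∘ σ.symm = (π p).succAbove := by
    have hmono : StrictMono (π ∘ p.succAbove ∘ σ.symm) := fun a b hab => by simpa [h] using hab
    refine (hmono.range_inj (Fin.strictMono_succAbove _)).1 ?_
    rw [Set.range_comp, σ.symm.surjective.range_comp, Fin.range_succAbove, Fin.range_succAbove,
      Set.image_compl_eq π.bijective, Set.image_singleton]
  refine Equiv.ext <| (Fin.forall_iff_succAbove p).2 ⟨insertAt_self.symm, fun i => ?_⟩
  simpa using congrFun hcomp (σ i)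

theorem exists_eq_insertAt_iff :
    (∃ v, π = insertAt σ p v) ↔ ∀ i j, π (p.succAbove i) < π (p.succAbove j) ↔ σ i < σ j := by
  refine ⟨?_, fun h => ⟨π p, eq_insertAt_of_lt_iff_lt h⟩⟩
  rintro ⟨v, rfl⟩ i j
  simp

theorem isLeftExtension_iff_exists_eq_insertAt :
    IsLeftExtension σ π ↔ ∃ v, π = insertAt σ 0 v := by
  simp [exists_eq_insertAt_iff, IsLeftExtension]

theorem isRightExtension_iff_exists_eq_insertAt :
    IsRightExtension σ π ↔ ∃ v, π = insertAt σ (Fin.last n) v := by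
  simp [exists_eq_insertAt_iff, IsRightExtension]

end InsertAt

section Crucial

variable {n : ℕ} {σ : Perm (Fin n)}

theorem leftCrucial_iff :
    LeftCrucial σ ↔ SquareFree σ ∧ ∀ v, ∃ ℓ ≤ (n + 1) / 2, HasSquareAt (insertAt σ 0 v) 0 ℓ := by
  refine and_congr_right fun hσ => ?_
  simp only [isLeftExtension_iff_exists_eq_insertAt, forall_exists_index, forall_eq_apply_imp_iff]
  exact forall_congr' fun v =>
    (isLeftExtension_iff_exists_eq_insertAt.2 ⟨v, rfl⟩).containsSquare_iff hσ

theorem rightCrucial_iff :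
    RightCrucial σ ↔ SquareFree σ ∧ ∀ v, ∃ ℓ ≤ (n + 1) / 2,
      HasSquareAt (insertAt σ (Fin.last n) v) (n + 1 - 2 * ℓ) ℓ := by
  refine and_congr_right fun hσ => ?_
  simp only [isRightExtension_iff_exists_eq_insertAt, forall_exists_index, forall_eq_apply_imp_iff]
  exact forall_congr' fun v =>
    (isRightExtension_iff_exists_eq_insertAt.2 ⟨v, rfl⟩).containsSquare_iff hσ

instance : Decidable (LeftCrucial σ) :=
  decidable_of_iff' _ leftCrucial_iff

instance : Decidable (RightCrucial σ) :=
  decidable_of_iff' _ rightCrucial_iff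

instance : Decidable (Bicrucial σ) :=
  inferInstanceAs (Decidable (LeftCrucial σ ∧ RightCrucial σ))

end Crucial

section Witness

/-- The permutation with one-line notation `w`. Reading `w` by `List.getD` requires no proof that
an index is in range, which keeps kernel evaluation fast; a word shorter than `n` is completed by
`i ↦ i`. -/
noncomputable def permOfWord {n : ℕ} (w : List (Fin n))
    (hw : Function.Injective fun i : Fin n => w.getD i i) : Perm (Fin n) :=
  .ofBijective _ hw.bijective_of_finite

theorem exists_bicrucial_32 : ∃ σ : Perm (Fin 32), Bicrucial σ :=
  ⟨permOfWord
    [26, 30, 31, 1, 0, 25, 29, 28, 21, 24, 27, 18, 2, 19, 23, 20, 13, 17, 22, 4, 3, 12, 16,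
      15, 9, 11, 14, 6, 5, 8, 10, 7]
    (by decide +kernel), by decide +kernel⟩

theorem exists_bicrucial_34 : ∃ σ : Perm (Fin 34), Bicrucial σ :=
  ⟨permOfWord
    [0, 33, 29, 26, 30, 32, 31, 22, 23, 27, 18, 17, 24, 28, 25, 12, 15, 21, 13, 10, 16, 20,
      19, 6, 7, 11, 4, 3, 8, 14, 9, 1, 2, 5]
    (by decide +kernel), by decide +kernel⟩

theorem exists_bicrucial_36 : ∃ σ : Perm (Fin 36), Bicrucial σ :=
  ⟨permOfWord
    [0, 19, 6, 2, 9, 11, 7, 1, 5, 18, 12, 10, 15, 16, 13, 4, 8, 20, 17, 14, 24, 27, 23, 3, 22,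
      34, 28, 26, 31, 32, 29, 21, 25, 35, 33, 30]
    (by decide +kernel), by decide +kernel⟩

theorem exists_bicrucial_40 : ∃ σ : Perm (Fin 40), Bicrucial σ :=
  ⟨permOfWord
    [0, 8, 7, 2, 6, 36, 9, 1, 10, 17, 5, 3, 4, 19, 18, 12, 21, 22, 16, 11, 14, 35, 23, 20, 26,
      30, 24, 13, 15, 32, 31, 27, 34, 37, 29, 25, 28, 39, 38, 33]
    (by decide +kernel), by decide +kernel⟩

theorem exists_bicrucial_42 : ∃ σ : Perm (Fin 42), Bicrucial σ :=
  ⟨permOfWord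
    [0, 41, 35, 2, 36, 40, 37, 1, 26, 38, 25, 21, 29, 39, 34, 16, 20, 24, 19, 18, 23, 28, 27,
      15, 17, 22, 14, 9, 31, 33, 32, 4, 8, 12, 7, 6, 11, 30, 13, 3, 5, 10]
    (by decide +kernel), by decide +kernel⟩

theorem exists_bicrucial_44 : ∃ σ : Perm (Fin 44), Bicrucial σ :=
  ⟨permOfWord
    [0, 35, 32, 3, 33, 34, 30, 1, 2, 31, 14, 4, 15, 16, 8, 6, 7, 25, 17, 10, 21, 23, 20, 9,
      12, 26, 24, 22, 27, 29, 13, 5, 11, 42, 36, 19, 38, 40, 37, 18, 28, 43, 41, 39]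
    (by decide +kernel), by decide +kernel⟩

theorem exists_bicrucial_46 : ∃ σ : Perm (Fin 46), Bicrucial σ :=
  ⟨permOfWord
    [0, 42, 40, 2, 39, 41, 24, 1, 25, 38, 36, 26, 35, 37, 29, 27, 31, 34, 32, 15, 23, 30, 21,
      17, 22, 33, 28, 13, 14, 18, 12, 11, 20, 45, 43, 5, 10, 19, 8, 6, 9, 44, 16, 3, 4, 7]
    (by decide +kernel), by decide +kernel⟩

end Witness

/-- For every `n ∈ {32, 34, 36, 40, 42, 44, 46}`, there exists a bicrucial
permutation of length `n`. -/
theorem bicrucial_exists_small_even (n : ℕ)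
    (hn : n ∈ ({32, 34, 36, 40, 42, 44, 46} : Finset ℕ)) :
    ∃ σ : Equiv.Perm (Fin n), Bicrucial σ := by
  simp only [Finset.mem_insert, Finset.mem_singleton] at hn
  rcases hn with rfl | rfl | rfl | rfl | rfl | rfl | rfl
  · exact exists_bicrucial_32
  · exact exists_bicrucial_34
  · exact exists_bicrucial_36
  · exact exists_bicrucial_40
  · exact exists_bicrucial_42
  · exact exists_bicrucial_44
  · exact exists_bicrucial_46
end

section
/- For every integer k ≥ 5 with k ≡ 1 (mod 4), there exists a square-free permutation π of length k such that π_1 = max{π_0, π_1, π_2} and π_{k−1} = k − 1. -/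
/-!
Read from right to left, the permutation lists the ranks of a self-similar sequence `x` whose
ascents have period four: `x n < x (n + 1)` exactly when `n ≡ 1` or `2` modulo `4`. The two halves
of a square have the same pattern of ascents, so this periodicity forces the half-length of a square
in `x` to be a multiple of four. Self-similarity says that the terms with even index are ordered
like `x` itself, so keeping only those terms of a square leaves a square of half the length, and
infinite descent rules squares out.

Such a sequence is obtained by placing the terms of index `1` modulo `4` at the bottom, those of
index `3` modulo `4` at the top, and a compressed copy of the whole sequence in between. The term
of index `0` is the maximum; it becomes the last entry of the permutation.
-/

/-- The factors of length `ℓ` of the sequence `x` starting at `a` and at `a + ℓ` are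
order-isomorphic: the analogue of `HasSquareAt` for infinite sequences, except that `ℓ ≤ 1` is not
excluded. -/
def IsSquareFactor {α : Type*} [LT α] (x : ℕ → α) (a ℓ : ℕ) : Prop :=
  ∀ i < ℓ, ∀ j < ℓ, (x (a + i) < x (a + j) ↔ x (a + ℓ + i) < x (a + ℓ + j))

namespace IsSquareFactor

variable {α : Type*} [LT α] {x : ℕ → α} {a ℓ m : ℕ}

lemma ascent_iff (h : IsSquareFactor x a ℓ) {i : ℕ} (hi : i + 1 < ℓ) :
    x (a + i) < x (a + i + 1) ↔ x (a + ℓ + i) < x (a + ℓ + i + 1) :=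
  h i (by omega) (i + 1) hi

lemma four_dvd (h : IsSquareFactor x a ℓ) (hℓ : 2 ≤ ℓ)
    (ascent : ∀ n, x n < x (n + 1) ↔ n % 4 = 1 ∨ n % 4 = 2) : 4 ∣ ℓ := by
  have first := h.ascent_iff (i := 0) (by omega)
  rw [ascent, ascent] at first
  -- Exactly one of the steps at `a` and `a + 2` is an ascent, so `first` excludes `ℓ = 2`.
  have three_le : 3 ≤ ℓ := by omega
  have second := h.ascent_iff (i := 1) (by omega)
  rw [ascent, ascent] at second
  omega

lemma halve (h : IsSquareFactor x a (2 * m))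
    (double : ∀ s t, x (2 * s) < x (2 * t) ↔ x s < x t) :
    IsSquareFactor x ((a + 1) / 2) m := by
  intro i hi j hj
  obtain ⟨δ, hδ, even_start⟩ : ∃ δ ≤ 1, a + δ = 2 * ((a + 1) / 2) :=
    ⟨2 * ((a + 1) / 2) - a, by omega, by omega⟩
  have left_index (r : ℕ) : a + (δ + 2 * r) = 2 * ((a + 1) / 2 + r) := by omega
  have right_index (r : ℕ) : a + 2 * m + (δ + 2 * r) = 2 * ((a + 1) / 2 + m + r) := by omega
  simpa only [left_index, right_index, double] using
    h (δ + 2 * i) (by omega) (δ + 2 * j) (by omega)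

end IsSquareFactor

theorem not_isSquareFactor_of_ascent_of_double {α : Type*} [LT α] {x : ℕ → α}
    (ascent : ∀ n, x n < x (n + 1) ↔ n % 4 = 1 ∨ n % 4 = 2)
    (double : ∀ s t, x (2 * s) < x (2 * t) ↔ x s < x t) (a : ℕ) {ℓ : ℕ} (hℓ : 2 ≤ ℓ) :
    ¬ IsSquareFactor x a ℓ := by
  induction ℓ using Nat.strong_induction_on generalizing a with
  | _ ℓ ih =>
    intro h
    obtain ⟨q, rfl⟩ := h.four_dvd hℓ ascent
    rw [show 4 * q = 2 * (2 * q) by ring] at h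
    exact ih (2 * q) (by omega) _ (by omega) (h.halve double)

/-- The height of the `n`-th term of the self-similar sequence; distinct terms may have the same
height. Compression is by cubing because that map is strictly monotone, contracts `[-1/2, 1/2]`, and
fixes the maximum `1` placed at index `0`, so that the doubling rule holds at every index. -/
def foldHeight (n : ℕ) : ℚ :=
  if n = 0 then 1
  else if n % 4 = 1 then -1 / 2
  else if n % 4 = 3 then 1 / 2
  else foldHeight (n / 2) ^ 3
termination_by n

section foldHeight

variable {n : ℕ}

lemma foldHeight_zero : foldHeight 0 = 1 := by
  rw [foldHeight, if_pos rfl]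

lemma foldHeight_of_mod_four_eq_one (h : n % 4 = 1) : foldHeight n = -1 / 2 := by
  rw [foldHeight, if_neg (by omega), if_pos h]

lemma foldHeight_of_mod_four_eq_three (h : n % 4 = 3) : foldHeight n = 1 / 2 := by
  rw [foldHeight, if_neg (by omega), if_neg (by omega), if_pos h]

lemma foldHeight_two_mul (n : ℕ) : foldHeight (2 * n) = foldHeight n ^ 3 := by
  rcases eq_or_ne n 0 with rfl | hn
  · norm_num [foldHeight_zero]
  · rw [foldHeight, if_neg (by omega), if_neg (by omega), if_neg (by omega),
      Nat.mul_div_cancel_left n two_pos]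

lemma abs_foldHeight_le_half (hn : n ≠ 0) : |foldHeight n| ≤ 1 / 2 := by
  induction n using Nat.strong_induction_on with
  | _ n ih =>
    rcases Nat.even_or_odd' n with ⟨m, rfl | rfl⟩
    · rw [foldHeight_two_mul, abs_pow]
      calc |foldHeight m| ^ 3
          ≤ (1 / 2) ^ 3 := by gcongr; exact ih m (by omega) (by omega)
        _ ≤ 1 / 2 := by norm_num
    · obtain h | h : (2 * m + 1) % 4 = 1 ∨ (2 * m + 1) % 4 = 3 := by omega
      · norm_num [foldHeight_of_mod_four_eq_one h]
      · norm_num [foldHeight_of_mod_four_eq_three h]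

lemma abs_foldHeight_lt_half_of_even (hn : n ≠ 0) (even : Even n) : |foldHeight n| < 1 / 2 := by
  obtain ⟨m, rfl⟩ := even.two_dvd
  rw [foldHeight_two_mul, abs_pow]
  calc |foldHeight m| ^ 3
      ≤ (1 / 2) ^ 3 := by gcongr; exact abs_foldHeight_le_half (by omega)
    _ < 1 / 2 := by norm_num

lemma foldHeight_lt_foldHeight_zero (hn : n ≠ 0) : foldHeight n < foldHeight 0 := by
  rw [foldHeight_zero]
  linarith [le_of_abs_le (abs_foldHeight_le_half hn)]

lemma foldHeight_lt_of_mod_four_eq_one_of_even {m : ℕ} (hn : n % 4 = 1) (even : Even m) :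
    foldHeight n < foldHeight m := by
  rw [foldHeight_of_mod_four_eq_one hn]
  rcases eq_or_ne m 0 with rfl | hm
  · norm_num [foldHeight_zero]
  · linarith [neg_lt_of_abs_lt (abs_foldHeight_lt_half_of_even hm even)]

lemma foldHeight_lt_of_even_of_mod_four_eq_three {m : ℕ} (hm : m ≠ 0) (even : Even m)
    (hn : n % 4 = 3) : foldHeight m < foldHeight n := by
  rw [foldHeight_of_mod_four_eq_three hn]
  exact lt_of_abs_lt (abs_foldHeight_lt_half_of_even hm even)

lemma foldHeight_lt_foldHeight_succ (h : n % 4 = 1 ∨ n % 4 = 2) :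
    foldHeight n < foldHeight (n + 1) := by
  rcases h with h | h
  · exact foldHeight_lt_of_mod_four_eq_one_of_even h (by grind)
  · exact foldHeight_lt_of_even_of_mod_four_eq_three (by omega) (by grind) (by omega)

lemma foldHeight_succ_lt_foldHeight (h : n % 4 = 0 ∨ n % 4 = 3) :
    foldHeight (n + 1) < foldHeight n := by
  rcases h with h | h
  · exact foldHeight_lt_of_mod_four_eq_one_of_even (by omega) (by grind)
  · exact foldHeight_lt_of_even_of_mod_four_eq_three (by omega) (by grind) h

end foldHeight

/-- The injective self-similar sequence: `foldHeight` with ties broken by the index. -/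
def foldSeq (n : ℕ) : ℚ ×ₗ ℕ :=
  toLex (foldHeight n, n)

lemma foldSeq_injective : Function.Injective foldSeq :=
  fun _ _ h ↦ congrArg (fun p ↦ (ofLex p).2) h

lemma foldSeq_lt_of_foldHeight_lt {m n : ℕ} (h : foldHeight m < foldHeight n) :
    foldSeq m < foldSeq n :=
  Prod.Lex.toLex_lt_toLex.2 (Or.inl h)

lemma foldSeq_le_foldSeq_zero (n : ℕ) : foldSeq n ≤ foldSeq 0 := by
  rcases eq_or_ne n 0 with rfl | hn
  · rfl
  · exact (foldSeq_lt_of_foldHeight_lt (foldHeight_lt_foldHeight_zero hn)).le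

lemma foldSeq_lt_foldSeq_succ_iff (n : ℕ) :
    foldSeq n < foldSeq (n + 1) ↔ n % 4 = 1 ∨ n % 4 = 2 := by
  refine ⟨fun ascent ↦ ?_, fun h ↦ foldSeq_lt_of_foldHeight_lt (foldHeight_lt_foldHeight_succ h)⟩
  by_contra h
  exact ascent.asymm (foldSeq_lt_of_foldHeight_lt (foldHeight_succ_lt_foldHeight (by omega)))

lemma foldSeq_two_mul_lt_iff (m n : ℕ) :
    foldSeq (2 * m) < foldSeq (2 * n) ↔ foldSeq m < foldSeq n := by
  have cube_strictMono : StrictMono fun t : ℚ ↦ t ^ 3 := Odd.strictMono_pow (by decide)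
  simp only [foldSeq, Prod.Lex.toLex_lt_toLex, foldHeight_two_mul, cube_strictMono.lt_iff_lt,
    cube_strictMono.injective.eq_iff, Nat.mul_lt_mul_left two_pos]

theorem not_isSquareFactor_foldSeq (a : ℕ) {ℓ : ℕ} (hℓ : 2 ≤ ℓ) : ¬ IsSquareFactor foldSeq a ℓ :=
  not_isSquareFactor_of_ascent_of_double foldSeq_lt_foldSeq_succ_iff foldSeq_two_mul_lt_iff a hℓ

lemma exists_perm_lt_iff_lt {α : Type*} [LinearOrder α] {n : ℕ} {f : Fin n → α}
    (hf : Function.Injective f) :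
    ∃ σ : Equiv.Perm (Fin n), ∀ i j, σ i < σ j ↔ f i < f j := by
  have sorted : StrictMono (f ∘ Tuple.sort f) :=
    (Tuple.monotone_sort f).strictMono_of_injective (hf.comp (Tuple.sort f).injective)
  refine ⟨(Tuple.sort f).symm, fun i j ↦ ?_⟩
  rw [← sorted.lt_iff_lt, Function.comp_apply, Function.comp_apply, Equiv.apply_symm_apply,
    Equiv.apply_symm_apply]

lemma perm_apply_eq_last_of_forall_le {n : ℕ} {σ : Equiv.Perm (Fin (n + 1))} {i : Fin (n + 1)}
    (h : ∀ j, σ j ≤ σ i) : σ i = Fin.last n :=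
  Fin.last_le_iff.1 (by simpa only [Equiv.apply_symm_apply] using h (σ.symm (Fin.last n)))

lemma squareFree_of_lt_iff_lt_rev {α : Type*} [LT α] {n : ℕ} {σ : Fin n → Fin n} {x : ℕ → α}
    (hσ : ∀ i j, σ i < σ j ↔ x i.rev < x j.rev)
    (hx : ∀ a ℓ, 2 ≤ ℓ → ¬ IsSquareFactor x a ℓ) : SquareFree σ := by
  rintro ⟨k, ℓ, hℓ, hb, square⟩
  refine hx (n - k - 2 * ℓ) ℓ hℓ fun i hi j hj ↦ ?_
  have reversed := (square (ℓ - 1 - i) (ℓ - 1 - j) (by omega) (by omega)).symm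
  have left_index (r : ℕ) (hr : r < ℓ) :
      n - (k + ℓ + (ℓ - 1 - r) + 1) = n - k - 2 * ℓ + r := by omega
  have right_index (r : ℕ) (hr : r < ℓ) :
      n - (k + (ℓ - 1 - r) + 1) = n - k - 2 * ℓ + ℓ + r := by omega
  simpa only [hσ, Fin.val_rev, left_index i hi, left_index j hj, right_index i hi,
    right_index j hj] using reversed

/-- For every integer `k ≥ 5` with `k ≡ 1 (mod 4)`, there exists a square-free
permutation `π` of length `k` with `π 1 = max {π 0, π 1, π 2}` and `π (k - 1) = k - 1`. -/
theorem squareFree_perm_with_boundary_conditions (k : ℕ) (hk : 5 ≤ k) (hmod : k % 4 = 1) :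
    ∃ π : Equiv.Perm (Fin k), SquareFree ⇑π ∧
      π ⟨1, by omega⟩ = max (max (π ⟨0, by omega⟩) (π ⟨1, by omega⟩)) (π ⟨2, by omega⟩) ∧
      (π ⟨k - 1, by omega⟩ : ℕ) = k - 1 := by
  have rev_injective : Function.Injective fun i : Fin k ↦ foldSeq i.rev :=
    foldSeq_injective.comp (Fin.val_injective.comp Fin.rev_injective)
  obtain ⟨π, hπ⟩ := exists_perm_lt_iff_lt rev_injective
  obtain ⟨n, rfl⟩ : ∃ n, k = n + 3 := ⟨k - 3, by omega⟩
  refine ⟨π, squareFree_of_lt_iff_lt_rev hπ fun a _ ↦ not_isSquareFactor_foldSeq a, ?_, ?_⟩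
  · have first_lt : π ⟨0, by omega⟩ < π ⟨1, by omega⟩ :=
      (hπ _ _).2 <| foldSeq_lt_of_foldHeight_lt <| foldHeight_succ_lt_foldHeight (n := n + 1)
        (by omega)
    have third_lt : π ⟨2, by omega⟩ < π ⟨1, by omega⟩ :=
      (hπ _ _).2 <| foldSeq_lt_of_foldHeight_lt <| foldHeight_lt_foldHeight_succ (n := n)
        (by omega)
    rw [max_eq_right first_lt.le, max_eq_left third_lt.le]
  · have last_max (j : Fin (n + 3)) : π j ≤ π ⟨n + 2, by omega⟩ := by
      rw [← not_lt, hπ, not_lt]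
      simpa using foldSeq_le_foldSeq_zero j.rev
    exact congrArg Fin.val (perm_apply_eq_last_of_forall_le last_max)
end

section
/- Let π be a square-free permutation of length n, and let σ be a permutation of length 2n such that σ_i < ⌈n/2⌉ whenever i ≡ 1 (mod 4), σ_{2j} = π_j + ⌈n/2⌉ for every j ∈ {0,…,n−1}, and σ_i ≥ n + ⌈n/2⌉ whenever i ≡ 3 (mod 4). Then σ is square-free. -/
/-!
Medium entries sit at even positions and alternately low and high entries sit between them, so the
ascents of `σ` are exactly the positions congruent to `1` or `2` modulo `4`. The two halves of a
square have the same ascents; since this pattern has no period smaller than `4`, the half-length of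
a square in `σ` is a multiple `4 * m` of `4`. Keeping only the even positions of such a square then
leaves a square of half-length `2 * m ≥ 2` in `π`.
-/

/-- Position `i` is an ascent of the sequence `σ`: the entry at `i` has a successor, and that
successor is larger. The bound `i + 1 < n` is part of the notion, so that `i` ranges over `ℕ`. -/
def IsAscent {n : ℕ} (σ : Fin n → Fin n) (i : ℕ) : Prop :=
  ∃ hi : i + 1 < n, σ ⟨i, by omega⟩ < σ ⟨i + 1, hi⟩

theorem isAscent_iff_of_high_medium_low {n a b : ℕ} {σ : Fin (2 * n) → Fin (2 * n)}
    (hlow : ∀ i : Fin (2 * n), (i : ℕ) % 4 = 1 → (σ i : ℕ) < a)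
    (hmed : ∀ j : Fin n, (σ ⟨2 * j, by omega⟩ : ℕ) ∈ Set.Ico a b)
    (hhigh : ∀ i : Fin (2 * n), (i : ℕ) % 4 = 3 → b ≤ (σ i : ℕ))
    (i : ℕ) (hi : i + 1 < 2 * n) :
    IsAscent σ i ↔ i % 4 = 1 ∨ i % 4 = 2 := by
  simp only [IsAscent, hi, exists_true_left, Fin.lt_def]
  obtain ⟨j, rfl | rfl⟩ := i.even_or_odd'
  · have medium : (σ ⟨2 * j, by omega⟩ : ℕ) ∈ Set.Ico a b := hmed ⟨j, by omega⟩
    have low := hlow ⟨2 * j + 1, hi⟩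
    have high := hhigh ⟨2 * j + 1, hi⟩
    grind
  · have medium : (σ ⟨2 * j + 1 + 1, hi⟩ : ℕ) ∈ Set.Ico a b := hmed ⟨j + 1, by omega⟩
    have low := hlow ⟨2 * j + 1, by omega⟩
    have high := hhigh ⟨2 * j + 1, by omega⟩
    grind

namespace HasSquareAt

theorem isAscent_iff {n k ℓ i : ℕ} {σ : Fin n → Fin n} (hsq : HasSquareAt σ k ℓ)
    (hi : i + 1 < ℓ) : IsAscent σ (k + i) ↔ IsAscent σ (k + ℓ + i) := by
  obtain ⟨-, hb, hiso⟩ := hsq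
  have hk : k + i + 1 < n := by omega
  have hkℓ : k + ℓ + i + 1 < n := by omega
  simp only [IsAscent, hk, hkℓ, exists_true_left]
  exact hiso i (i + 1) (by omega) hi

theorem four_dvd {n k ℓ : ℕ} {σ : Fin n → Fin n}
    (hasc : ∀ i, i + 1 < n → (IsAscent σ i ↔ i % 4 = 1 ∨ i % 4 = 2))
    (hsq : HasSquareAt σ k ℓ) : 4 ∣ ℓ := by
  have ⟨hℓ, hb, _⟩ := hsq
  have hperiod : ∀ i, i + 1 < ℓ → ((k + i) % 4 = 1 ∨ (k + i) % 4 = 2 ↔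
      (k + ℓ + i) % 4 = 1 ∨ (k + ℓ + i) % 4 = 2) := fun i hi ↦ by
    rw [← hasc (k + i) (by omega), ← hasc (k + ℓ + i) (by omega)]
    exact hsq.isAscent_iff hi
  have hfirst := hperiod 0 (by omega)
  -- A shift by `2` complements the ascent pattern, so one comparison rules it out; an odd shift
  -- can agree with the pattern at one position but not at two consecutive ones.
  rcases eq_or_ne ℓ 2 with rfl | hne
  · omega
  · have hsecond := hperiod 1 (by omega)
    omega

theorem of_even_positions {n k m : ℕ} {π : Fin n → Fin n} {σ : Fin (2 * n) → Fin (2 * n)}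
    (heven : ∀ i j : Fin n, σ ⟨2 * i, by omega⟩ < σ ⟨2 * j, by omega⟩ ↔ π i < π j)
    (hm : 2 ≤ m) (hsq : HasSquareAt σ k (2 * m)) : HasSquareAt π ((k + 1) / 2) m := by
  obtain ⟨-, hb, hiso⟩ := hsq
  refine ⟨hm, by omega, fun i j hi hj ↦ ?_⟩
  have key := hiso (k % 2 + 2 * i) (k % 2 + 2 * j) (by omega) (by omega)
  rw [← heven, ← heven]
  have hleft (i : ℕ) : k + (k % 2 + 2 * i) = 2 * ((k + 1) / 2 + i) := by omega
  have hright (i : ℕ) : k + 2 * m + (k % 2 + 2 * i) = 2 * ((k + 1) / 2 + m + i) := by omega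
  simpa only [hleft, hright] using key

end HasSquareAt

theorem high_medium_low_squareFree_general {n : ℕ} {π : Fin n → Fin n}
    {σ : Fin (2 * n) → Fin (2 * n)} (hπ : SquareFree π)
    (hasc : ∀ i, i + 1 < 2 * n → (IsAscent σ i ↔ i % 4 = 1 ∨ i % 4 = 2))
    (heven : ∀ i j : Fin n, σ ⟨2 * i, by omega⟩ < σ ⟨2 * j, by omega⟩ ↔ π i < π j) :
    SquareFree σ := by
  rintro ⟨k, ℓ, hsq⟩
  obtain ⟨m, rfl⟩ : 4 ∣ ℓ := hsq.four_dvd hasc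
  have hm : 2 ≤ 2 * m := by
    have := hsq.1
    omega
  rw [show 4 * m = 2 * (2 * m) by ring] at hsq
  exact hπ ⟨(k + 1) / 2, 2 * m, hsq.of_even_positions heven hm⟩

/-- High-medium-low construction: if `π` is a square-free permutation of length `n`
and `σ` is a permutation of length `2n` with `σ i < ⌈n/2⌉` whenever `i ≡ 1 (mod 4)`,
`σ (2 j) = π j + ⌈n/2⌉` for every `j < n`, and `σ i ≥ n + ⌈n/2⌉` whenever
`i ≡ 3 (mod 4)`, then `σ` is square-free. -/
theorem high_medium_low_squareFree (n : ℕ) (π : Equiv.Perm (Fin n))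
    (σ : Equiv.Perm (Fin (2 * n)))
    (hπ : SquareFree ⇑π)
    (hlow : ∀ i : Fin (2 * n), (i : ℕ) % 4 = 1 → (σ i : ℕ) < (n + 1) / 2)
    (hmed : ∀ (j : ℕ) (hj : j < n),
      (σ ⟨2 * j, by omega⟩ : ℕ) = (π ⟨j, hj⟩ : ℕ) + (n + 1) / 2)
    (hhigh : ∀ i : Fin (2 * n), (i : ℕ) % 4 = 3 → n + (n + 1) / 2 ≤ (σ i : ℕ)) :
    SquareFree ⇑σ :=
  high_medium_low_squareFree_general hπ
    (isAscent_iff_of_high_medium_low hlow (fun j ↦ by simp [hmed j j.isLt]) hhigh)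
    (fun i j ↦ by
      simp only [Fin.lt_def, hmed i i.isLt, hmed j j.isLt, Nat.add_lt_add_iff_right])
end

section
/- Each of the four permutations (0, 4, 7, 3, 1, 2, 8, 6, 5, 11, 13, 10, 9, 12), (0, 4, 7, 3, 1, 2, 8, 6, 5, 13, 15, 12, 10, 11, 14, 9), (0, 4, 7, 3, 1, 2, 8, 6, 5, 12, 13, 11, 9, 10, 16, 15, 14, 17), and (0, 9, 12, 8, 1, 7, 13, 11, 10, 14, 15, 6, 3, 4, 17, 16, 5, 18, 19, 2) is right-crucial. -/
/- Only the position of the new entry `x` relative to the last entry `c` matters. If the suffix is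
`a b c`, then `a b c x` is a square as soon as `x` lies on the same side of `c` as `b` does of `a`;
on the other side of `c`, each of the four permutations is arranged so that `x` completes a longer
square, of half-length 4 for the first two and 8 for the last two. -/

theorem eq_coe_of_lt_imp_lt {ι α : Type*} [LinearOrder α] [Finite α] {τ : ι → α} (σ : ι ≃ α)
    (h : ∀ i j, σ i < σ j → τ i < τ j) : τ = σ := by
  have hmono : StrictMono (τ ∘ σ.symm) := fun a b hab ↦
    h _ _ (by rwa [σ.apply_symm_apply, σ.apply_symm_apply])
  have hid : τ ∘ σ.symm = id := funext fun a ↦ le_antisymm hmono.apply_le hmono.le_apply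
  rwa [σ.comp_symm_eq, Function.id_comp] at hid

theorem eq_ofNat_of_val_eq {ι : Type*} {n : ℕ} [NeZero n] {f : ι → Fin n} {g : ι → ℕ}
    (h : ∀ i, (f i : ℕ) = g i) : f = fun i ↦ Fin.ofNat n (g i) :=
  funext fun i ↦ by rw [← h i, Fin.ofNat_val_eq_self]

section RightCrucial

variable {n : ℕ}

/-- The right-extension of `σ` whose last entry is `p`: entries of `σ` that are at least `p` move up
by one. -/
def appendValue (σ : Fin n → Fin n) (p : Fin (n + 1)) : Fin (n + 1) → Fin (n + 1) :=
  Fin.snoc (α := fun _ ↦ Fin (n + 1)) (p.succAbove ∘ σ) p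

theorem IsRightExtension.eq_appendValue {σ : Equiv.Perm (Fin n)} {π : Fin (n + 1) → Fin (n + 1)}
    (hπ : IsRightExtension σ π) (hinj : Function.Injective π) :
    π = appendValue σ (π (Fin.last n)) := by
  have hne (i : Fin n) : π i.castSucc ≠ π (Fin.last n) :=
    hinj.ne (Fin.castSucc_ne_last i)
  choose τ hτ using fun i ↦ Fin.exists_succAbove_eq (hne i)
  have hτσ : τ = σ := eq_coe_of_lt_imp_lt σ fun i j hij ↦ by
    rwa [← Fin.succAbove_lt_succAbove_iff (p := π (Fin.last n)), hτ, hτ, hπ]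
  subst hτσ
  funext i
  cases i using Fin.lastCases with
  | last => rw [appendValue, Fin.snoc_last]
  | cast i => rw [appendValue, Fin.snoc_castSucc, Function.comp_apply, hτ]

section Square

variable {σ : Fin n → Fin n} {k ℓ : ℕ}

theorem hasSquareAt_iff : HasSquareAt σ k ℓ ↔ 2 ≤ ℓ ∧ ∃ _ : k + 2 * ℓ ≤ n, ∀ i j : Fin ℓ,
    (σ ⟨k + i, by omega⟩ < σ ⟨k + j, by omega⟩ ↔
      σ ⟨k + ℓ + i, by omega⟩ < σ ⟨k + ℓ + j, by omega⟩) :=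
  and_congr_right' <| exists_congr fun _ ↦
    ⟨fun h i j ↦ h i j i.2 j.2, fun h i j hi hj ↦ h ⟨i, hi⟩ ⟨j, hj⟩⟩

theorem containsSquare_iff : ContainsSquare σ ↔ ∃ k ℓ : Fin n, HasSquareAt σ k ℓ := by
  refine ⟨fun ⟨k, ℓ, h⟩ ↦ ?_, fun ⟨k, ℓ, h⟩ ↦ ⟨k, ℓ, h⟩⟩
  obtain ⟨hℓ, hb, -⟩ := id h
  exact ⟨⟨k, by omega⟩, ⟨ℓ, by omega⟩, h⟩

instance inst_s14 : Decidable (HasSquareAt σ k ℓ) := decidable_of_iff' _ hasSquareAt_iff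

instance : Decidable (ContainsSquare σ) := decidable_of_iff' _ containsSquare_iff

instance inst_s14_2 : Decidable (SquareFree σ) := inferInstanceAs (Decidable ¬ContainsSquare σ)

/-- The last `2 * ℓ` entries of `σ` form a square. When `n < 2 * ℓ` the subtraction truncates, but
then `HasSquareAt` fails. -/
def HasSuffixSquare (σ : Fin n → Fin n) (ℓ : ℕ) : Prop :=
  HasSquareAt σ (n - 2 * ℓ) ℓ

instance : Decidable (HasSuffixSquare σ ℓ) :=
  inferInstanceAs (Decidable (HasSquareAt _ _ _))

end Square

theorem rightCrucial_of_hasSuffixSquare {σ : Equiv.Perm (Fin n)} {f : Fin n → Fin n} (hσ : ⇑σ = f)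
    (hfree : SquareFree f) (ℓ : Fin (n + 1) → ℕ)
    (hsq : ∀ p, HasSuffixSquare (appendValue f p) (ℓ p)) : RightCrucial σ := by
  subst hσ
  refine ⟨hfree, fun π hπ ↦ ?_⟩
  rw [hπ.eq_appendValue π.injective]
  exact ⟨_, _, hsq _⟩

end RightCrucial

/-- Each of the four listed permutations (of lengths 14, 16, 18, 20) is right-crucial. -/
theorem rightCrucial_four_suffix_patterns :
    (∀ σ : Equiv.Perm (Fin 14),
      (∀ i : Fin 14,
        (σ i : ℕ) = [0, 4, 7, 3, 1, 2, 8, 6, 5, 11, 13, 10, 9, 12].getD (i : ℕ) 0) →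
      RightCrucial σ) ∧
    (∀ σ : Equiv.Perm (Fin 16),
      (∀ i : Fin 16,
        (σ i : ℕ) = [0, 4, 7, 3, 1, 2, 8, 6, 5, 13, 15, 12, 10, 11, 14, 9].getD (i : ℕ) 0) →
      RightCrucial σ) ∧
    (∀ σ : Equiv.Perm (Fin 18),
      (∀ i : Fin 18,
        (σ i : ℕ) =
          [0, 4, 7, 3, 1, 2, 8, 6, 5, 12, 13, 11, 9, 10, 16, 15, 14, 17].getD (i : ℕ) 0) →
      RightCrucial σ) ∧
    (∀ σ : Equiv.Perm (Fin 20),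
      (∀ i : Fin 20,
        (σ i : ℕ) =
          [0, 9, 12, 8, 1, 7, 13, 11, 10, 14, 15, 6, 3, 4, 17, 16, 5, 18, 19, 2].getD
            (i : ℕ) 0) →
      RightCrucial σ) := by
  -- The thresholds 12, 9, 17 and 2 are the last entries of the four permutations.
  refine ⟨fun σ hσ ↦ ?_, fun σ hσ ↦ ?_, fun σ hσ ↦ ?_, fun σ hσ ↦ ?_⟩
  · exact rightCrucial_of_hasSuffixSquare (eq_ofNat_of_val_eq hσ) (by decide +kernel)
      (fun p ↦ if p ≤ 12 then 2 else 4) (by decide +kernel)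
  · exact rightCrucial_of_hasSuffixSquare (eq_ofNat_of_val_eq hσ) (by decide +kernel)
      (fun p ↦ if p ≤ 9 then 4 else 2) (by decide +kernel)
  · exact rightCrucial_of_hasSuffixSquare (eq_ofNat_of_val_eq hσ) (by decide +kernel)
      (fun p ↦ if p ≤ 17 then 2 else 8) (by decide +kernel)
  · exact rightCrucial_of_hasSuffixSquare (eq_ofNat_of_val_eq hσ) (by decide +kernel)
      (fun p ↦ if p ≤ 2 then 8 else 2) (by decide +kernel)
end

section
/- The number of left-crucial permutations of length 7 is exactly 60, and there are no left-crucial permutations of any length n ≤ 6. -/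
/-! A square in a left-extension `π` of `σ` is either a prefix of `π` or a square of `σ`. So `π` is
square-free exactly when `σ` is and `π` has no square prefix, and a square-free `σ` is left-crucial
exactly when each of its left-extensions, one for every choice of first value, has a square prefix.
Growing square-free permutations leftwards one value at a time, there are only 406 of length 7, few
enough to test them all. -/

instance decidableHasSquareAt {n : ℕ} (σ : Fin n → Fin n) (k ℓ : ℕ) :
    Decidable (HasSquareAt σ k ℓ) :=
  decidable_of_iff
    (2 ≤ ℓ ∧ ∃ _ : k + 2 * ℓ ≤ n, ∀ i j : Fin ℓ,
      (σ ⟨k + i, by omega⟩ < σ ⟨k + j, by omega⟩ ↔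
        σ ⟨k + ℓ + i, by omega⟩ < σ ⟨k + ℓ + j, by omega⟩))
    (and_congr_right fun _ => exists_congr fun _ =>
      ⟨fun h i j hi hj => h ⟨i, hi⟩ ⟨j, hj⟩, fun h i j => h i j i.isLt j.isLt⟩)

/-- `σ` begins with a square: one of its prefixes is a square. -/
def HasSquarePrefix {n : ℕ} (σ : Fin n → Fin n) : Prop :=
  ∃ ℓ : ℕ, HasSquareAt σ 0 ℓ

instance decidableHasSquarePrefix {n : ℕ} (σ : Fin n → Fin n) : Decidable (HasSquarePrefix σ) :=
  decidable_of_iff (∃ ℓ < n + 1, HasSquareAt σ 0 ℓ)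
    ⟨fun ⟨ℓ, _, h⟩ => ⟨ℓ, h⟩, fun ⟨ℓ, h⟩ => ⟨ℓ, by have := h.2.1; omega, h⟩⟩

namespace IsLeftExtension

variable {n : ℕ} {σ : Fin n → Fin n} {π : Fin (n + 1) → Fin (n + 1)}

theorem hasSquareAt_succ_iff_s18 (h : IsLeftExtension σ π) (k ℓ : ℕ) :
    HasSquareAt π (k + 1) ℓ ↔ HasSquareAt σ k ℓ := by
  have lt_iff (a b : ℕ) (ha : a + 1 < n + 1) (hb : b + 1 < n + 1) :
      π ⟨a + 1, ha⟩ < π ⟨b + 1, hb⟩ ↔ σ ⟨a, by omega⟩ < σ ⟨b, by omega⟩ := h ⟨a, _⟩ ⟨b, _⟩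
  simp only [HasSquareAt, Nat.add_right_comm _ 1, Nat.add_le_add_iff_right, lt_iff]

theorem containsSquare_iff_s18 (h : IsLeftExtension σ π) :
    ContainsSquare π ↔ HasSquarePrefix π ∨ ContainsSquare σ := by
  constructor
  · rintro ⟨_ | k, ℓ, hsq⟩
    · exact .inl ⟨ℓ, hsq⟩
    · exact .inr ⟨k, ℓ, (h.hasSquareAt_succ_iff_s18 k ℓ).1 hsq⟩
  · rintro (⟨ℓ, hsq⟩ | ⟨k, ℓ, hsq⟩)
    · exact ⟨0, ℓ, hsq⟩
    · exact ⟨k + 1, ℓ, (h.hasSquareAt_succ_iff_s18 k ℓ).2 hsq⟩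

end IsLeftExtension

theorem perm_eq_of_forall_lt_iff_lt {α : Type*} [LinearOrder α] [Finite α]
    {σ τ : Equiv.Perm α} (h : ∀ i j, σ i < σ j ↔ τ i < τ j) : σ = τ := by
  have hmono : StrictMono (τ * σ⁻¹) := fun a b hab => by simpa [← h] using hab
  exact (mul_inv_eq_one.1 (DFunLike.coe_injective hmono.eq_id)).symm

section Extensions

variable {n : ℕ}

/-- The left-extension `(v, τ_0, …, τ_{n-1})` of `σ` with first value `v`, where `τ` is `σ` with
its values `≥ v` raised by one. -/
def consPerm (v : Fin (n + 1)) (σ : Equiv.Perm (Fin n)) : Equiv.Perm (Fin (n + 1)) :=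
  (finSuccEquiv n).trans (σ.optionCongr.trans (finSuccEquiv' v).symm)

@[simp]
theorem consPerm_zero (v : Fin (n + 1)) (σ : Equiv.Perm (Fin n)) :
    consPerm v σ 0 = v := by
  simp [consPerm]

@[simp]
theorem consPerm_succ (v : Fin (n + 1)) (σ : Equiv.Perm (Fin n)) (i : Fin n) :
    consPerm v σ i.succ = v.succAbove (σ i) := by
  simp [consPerm]

theorem isLeftExtension_consPerm (v : Fin (n + 1)) (σ : Equiv.Perm (Fin n)) :
    IsLeftExtension σ (consPerm v σ) := by
  simp [IsLeftExtension]

theorem consPerm_injective2 : Function.Injective2 (consPerm (n := n)) := by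
  intro v w σ τ h
  obtain rfl : v = w := by simpa using DFunLike.congr_fun h 0
  refine ⟨rfl, Equiv.ext fun i => ?_⟩
  simpa using DFunLike.congr_fun h i.succ

/-- A permutation of length `n + 1` amounts to its first value and the pattern of the rest. Only
the forward map has to be evaluated below, so the inverse may come from a counting argument. -/
noncomputable def consPermEquiv (n : ℕ) :
    Fin (n + 1) × Equiv.Perm (Fin n) ≃ Equiv.Perm (Fin (n + 1)) :=
  Equiv.ofBijective (fun p => consPerm p.1 p.2) <|
    (Fintype.bijective_iff_injective_and_card _).2
      ⟨consPerm_injective2.uncurry, by simp [Fintype.card_perm, Nat.factorial_succ]⟩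

theorem isLeftExtension_iff_exists_consPerm {σ : Equiv.Perm (Fin n)}
    {π : Equiv.Perm (Fin (n + 1))} :
    IsLeftExtension σ π ↔ ∃ v, consPerm v σ = π := by
  constructor
  · intro h
    obtain ⟨⟨v, τ⟩, rfl⟩ := (consPermEquiv n).surjective π
    obtain rfl : τ = σ := perm_eq_of_forall_lt_iff_lt fun i j =>
      (isLeftExtension_consPerm v τ i j).symm.trans (h i j)
    exact ⟨v, rfl⟩
  · rintro ⟨v, rfl⟩
    exact isLeftExtension_consPerm v σ

theorem squareFree_consPerm_iff (v : Fin (n + 1)) (σ : Equiv.Perm (Fin n)) :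
    SquareFree (consPerm v σ) ↔ SquareFree σ ∧ ¬ HasSquarePrefix (consPerm v σ) := by
  rw [SquareFree, (isLeftExtension_consPerm v σ).containsSquare_iff_s18, not_or, and_comm, SquareFree]

theorem leftCrucial_iff_s18 (σ : Equiv.Perm (Fin n)) :
    LeftCrucial σ ↔ SquareFree σ ∧ ∀ v, HasSquarePrefix (consPerm v σ) := by
  refine and_congr_right fun hσ => ?_
  simp only [isLeftExtension_iff_exists_consPerm, forall_exists_index, forall_apply_eq_imp_iff]
  exact forall_congr' fun v =>
    (isLeftExtension_consPerm v σ).containsSquare_iff_s18.trans (or_iff_left hσ)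

end Extensions

/-- The square-free permutations of length `n`, in a recursive form that can be evaluated without
running through all `n!` permutations. -/
noncomputable def squareFreePerms : (n : ℕ) → Finset (Equiv.Perm (Fin n))
  | 0 => Finset.univ
  | n + 1 => ((Finset.univ ×ˢ squareFreePerms n).map (consPermEquiv n).toEmbedding).filter
      fun π => ¬ HasSquarePrefix π

theorem mem_squareFreePerms : ∀ {n : ℕ} {σ : Equiv.Perm (Fin n)},
    σ ∈ squareFreePerms n ↔ SquareFree σ
  | 0, σ => by
    refine iff_of_true (Finset.mem_univ σ) ?_
    rintro ⟨k, ℓ, hℓ, hb, -⟩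
    omega
  | n + 1, π => by
    obtain ⟨⟨v, σ⟩, rfl⟩ := (consPermEquiv n).surjective π
    simp only [squareFreePerms, Finset.mem_filter, Finset.mem_map_equiv, Equiv.symm_apply_apply,
      Finset.mem_product, Finset.mem_univ, true_and, mem_squareFreePerms]
    exact (squareFree_consPerm_iff v σ).symm

/-- The left-crucial permutations of length `n`, defined without quantifying over all permutations
of length `n + 1`. -/
noncomputable def leftCrucialPerms (n : ℕ) : Finset (Equiv.Perm (Fin n)) :=
  (squareFreePerms n).filter fun σ => ∀ v, HasSquarePrefix (consPerm v σ)

theorem mem_leftCrucialPerms {n : ℕ} {σ : Equiv.Perm (Fin n)} :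
    σ ∈ leftCrucialPerms n ↔ LeftCrucial σ := by
  rw [leftCrucialPerms, Finset.mem_filter, mem_squareFreePerms, leftCrucial_iff_s18]

theorem natCard_leftCrucial (n : ℕ) :
    Nat.card {σ : Equiv.Perm (Fin n) // LeftCrucial σ} = (leftCrucialPerms n).card :=
  Nat.subtype_card _ fun _ => mem_leftCrucialPerms

theorem leftCrucialPerms_eq_empty_of_le_six : ∀ n ≤ 6, leftCrucialPerms n = ∅ := by
  decide +kernel

theorem card_leftCrucialPerms_seven : (leftCrucialPerms 7).card = 60 := by
  decide +kernel

/-- The number of left-crucial permutations of length 7 is exactly 60, and there are no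
left-crucial permutations of any length `n ≤ 6`. -/
theorem card_leftCrucial_7 :
    Nat.card {σ : Equiv.Perm (Fin 7) // LeftCrucial σ} = 60 ∧
    ∀ n : ℕ, n ≤ 6 → ∀ σ : Equiv.Perm (Fin n), ¬ LeftCrucial σ := by
  refine ⟨(natCard_leftCrucial 7).trans card_leftCrucialPerms_seven, fun n hn σ hσ => ?_⟩
  have hmem : σ ∈ leftCrucialPerms n := mem_leftCrucialPerms.2 hσ
  simp [leftCrucialPerms_eq_empty_of_le_six n hn] at hmem
end
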